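/- Let r > 0, let α ∈ (−r, r), let β ∈ (α, r), let q ∈ [1,∞], let s ∈ (0,1], and let f : (0,1] → ℝ be measurable. Then ‖ u ↦ u^{−α} ∫₀^s (tu/(t+u)²)^r |f(t)| dt/t ‖_{L^q((0,1], du/u)} ≤ (2r/(r² − α²)) · s^{β−α} · ‖ u ↦ u^{−β} f(u) ‖_{L^q((0,1], du/u)}. -/

import Mathlib

/-!
The bound is Schur's test for the kernel `M(t,u) = (t/u)^α (tu/(t+u)²)^r` on `(0,1]` with the
measure `dt/t`. Writing `|f(t)| = t^β g(t)` and using `t^β ≤ s^(β-α) t^α` for `0 < t ≤ s`, the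
left-hand side is at most `s^(β-α) ∫ M(t,u) g(t) dt/t`. Since `tu/(t+u)² ≤ min(t/u, u/t)`, the
mass of `M` in the variable `t` is at most `1/(r+α) + 1/(r-α) = 2r/(r²-α²)`
(`lintegral_schurKernel_le`). Exchanging `t` and `u` amounts to replacing `α` by `-α`, which
leaves this constant unchanged, so the same bound holds in the variable `u`, and Schur's test
(`lqNorm_schur`) applies for every `q ∈ [1,∞]`.
-/

open MeasureTheory
open scoped ENNReal NNReal

/-- The measure `dt/t` on the interval `(0,1] ⊆ ℝ`. -/
noncomputable def haarIoc : Measure ℝ :=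
  (volume.restrict (Set.Ioc (0 : ℝ) 1)).withDensity fun t => ENNReal.ofReal t⁻¹

/-- The `L^q` norm on `(0,1]` with respect to the measure `dt/t`, for `q ∈ [1,∞]`:
the essential supremum if `q = ∞`, and `(∫₀¹ g(t)^q dt/t)^{1/q}` otherwise. -/
noncomputable def lqNorm (q : ℝ≥0∞) (g : ℝ → ℝ≥0∞) : ℝ≥0∞ :=
  if q = ⊤ then essSup g haarIoc
  else (∫⁻ t, g t ^ q.toReal ∂haarIoc) ^ (1 / q.toReal)


instance : SFinite haarIoc := by unfold haarIoc; infer_instance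

lemma lintegral_haarIoc (h : ℝ → ℝ≥0∞) (hh : Measurable h) :
    ∫⁻ t, h t ∂haarIoc = ∫⁻ t in Set.Ioc (0 : ℝ) 1, ENNReal.ofReal t⁻¹ * h t := by
  unfold haarIoc
  rw [lintegral_withDensity_eq_lintegral_mul _ (by fun_prop) hh]
  rfl

lemma ae_haarIoc : ∀ᵐ t ∂haarIoc, t ∈ Set.Ioc (0 : ℝ) 1 :=
  (withDensity_absolutelyContinuous _ _).ae_le (ae_restrict_mem measurableSet_Ioc)

lemma lqNorm_mono {q : ℝ≥0∞} {g h : ℝ → ℝ≥0∞} (H : ∀ u ∈ Set.Ioc (0 : ℝ) 1, g u ≤ h u) :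
    lqNorm q g ≤ lqNorm q h := by
  have H' : ∀ᵐ u ∂haarIoc, g u ≤ h u := ae_haarIoc.mono H
  unfold lqNorm
  split_ifs
  · exact essSup_mono_ae H'
  · refine ENNReal.rpow_le_rpow (lintegral_mono_ae ?_) (by positivity)
    filter_upwards [H'] with u hu
    exact ENNReal.rpow_le_rpow hu (by positivity)

/-- Jensen's inequality for `x ↦ x ^ p` with respect to a weight `w` of arbitrary total mass. -/
lemma lintegral_weight_rpow_le {X : Type*} [MeasurableSpace X] (μ : Measure X) (w g : X → ℝ≥0∞)
    (hw : Measurable w) (hg : Measurable g) {p : ℝ} (hp : 1 ≤ p) :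
    (∫⁻ t, w t * g t ∂μ) ^ p ≤ (∫⁻ t, w t ∂μ) ^ (p - 1) * ∫⁻ t, w t * g t ^ p ∂μ := by
  have hp0 : 0 < p := by linarith
  have h := eLpNorm'_le_eLpNorm'_mul_rpow_measure_univ (μ := μ.withDensity w) (f := g)
    one_pos hp hg.aestronglyMeasurable
  simp only [eLpNorm', enorm_eq_self, ENNReal.rpow_one, div_one] at h
  rw [lintegral_withDensity_eq_lintegral_mul _ hw hg,
    lintegral_withDensity_eq_lintegral_mul _ hw (hg.pow_const p),
    withDensity_apply _ MeasurableSet.univ, Measure.restrict_univ] at h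
  have h2 := ENNReal.rpow_le_rpow h hp0.le
  rw [ENNReal.mul_rpow_of_nonneg _ _ hp0.le, ← ENNReal.rpow_mul, ← ENNReal.rpow_mul,
    one_div_mul_cancel hp0.ne', ENNReal.rpow_one,
    show (1 - 1 / p) * p = p - 1 by field_simp] at h2
  exact h2.trans_eq (mul_comm _ _)

/-- Schur's test in `L^q((0,1], dt/t)`: both marginals of the kernel are bounded by `C`. -/
lemma lqNorm_schur {q : ℝ≥0∞} (hq : 1 ≤ q) (K : ℝ → ℝ → ℝ≥0∞)
    (hK : Measurable (Function.uncurry K)) (g : ℝ → ℝ≥0∞) (hg : Measurable g) (C : ℝ≥0∞)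
    (h₁ : ∀ u ∈ Set.Ioc (0 : ℝ) 1, ∫⁻ t, K u t ∂haarIoc ≤ C)
    (h₂ : ∀ t ∈ Set.Ioc (0 : ℝ) 1, ∫⁻ u, K u t ∂haarIoc ≤ C) :
    lqNorm q (fun u => ∫⁻ t, K u t * g t ∂haarIoc) ≤ C * lqNorm q g := by
  have hKu : ∀ u, Measurable (K u) := fun u => hK.comp measurable_prodMk_left
  have hKt : ∀ t, Measurable (fun u => K u t) := fun t => hK.comp measurable_prodMk_right
  unfold lqNorm
  split_ifs with hq'
  · refine essSup_le_of_ae_le _ ?_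
    filter_upwards [ae_haarIoc] with u hu
    calc ∫⁻ t, K u t * g t ∂haarIoc
        ≤ ∫⁻ t, K u t * essSup g haarIoc ∂haarIoc := by
          refine lintegral_mono_ae ?_
          filter_upwards [ENNReal.ae_le_essSup g] with t ht
          gcongr
      _ = (∫⁻ t, K u t ∂haarIoc) * essSup g haarIoc := lintegral_mul_const _ (hKu u)
      _ ≤ _ := by gcongr; exact h₁ u hu
  · set p := q.toReal
    have hp : 1 ≤ p := by
      have := ENNReal.toReal_mono hq' hq
      simpa using this
    have hp0 : 0 < p := by linarith
    have key : ∫⁻ u, (∫⁻ t, K u t * g t ∂haarIoc) ^ p ∂haarIoc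
        ≤ C ^ p * ∫⁻ t, g t ^ p ∂haarIoc := by
      calc ∫⁻ u, (∫⁻ t, K u t * g t ∂haarIoc) ^ p ∂haarIoc
          ≤ ∫⁻ u, C ^ (p - 1) * ∫⁻ t, K u t * g t ^ p ∂haarIoc ∂haarIoc := by
            refine lintegral_mono_ae ?_
            filter_upwards [ae_haarIoc] with u hu
            refine (lintegral_weight_rpow_le _ _ _ (hKu u) hg hp).trans ?_
            gcongr
            exact h₁ u hu
        _ = C ^ (p - 1) * ∫⁻ t, (∫⁻ u, K u t ∂haarIoc) * g t ^ p ∂haarIoc := by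
            have hm : Measurable (Function.uncurry fun u t => K u t * g t ^ p) :=
              hK.mul ((hg.comp measurable_snd).pow_const p)
            rw [lintegral_const_mul _ hm.lintegral_prod_right,
              lintegral_lintegral_swap hm.aemeasurable]
            congr 2
            ext t
            exact lintegral_mul_const _ (hKt t)
        _ ≤ C ^ (p - 1) * ∫⁻ t, C * g t ^ p ∂haarIoc := by
            gcongr 1
            refine lintegral_mono_ae ?_
            filter_upwards [ae_haarIoc] with t ht
            gcongr
            exact h₂ t ht
        _ = C ^ p * ∫⁻ t, g t ^ p ∂haarIoc := by
            rw [lintegral_const_mul _ (hg.pow_const p), ← mul_assoc]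
            congr 1
            conv_lhs => enter [2]; rw [← ENNReal.rpow_one C]
            rw [← ENNReal.rpow_add_of_nonneg _ _ (by linarith) zero_le_one, sub_add_cancel]
    refine (ENNReal.rpow_le_rpow key (by positivity)).trans_eq ?_
    rw [ENNReal.mul_rpow_of_nonneg _ _ (by positivity), ← ENNReal.rpow_mul,
      mul_one_div_cancel hp0.ne', ENNReal.rpow_one]

/-- The kernel `(t/u)^α (tu/(t+u)²)^r`. -/
noncomputable def schurKernel (r α u t : ℝ) : ℝ :=
  u ^ (-α) * t ^ α * (t * u / (t + u) ^ 2) ^ r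

lemma schurKernel_swap (r α u t : ℝ) : schurKernel r α u t = schurKernel r (-α) t u := by
  unfold schurKernel
  rw [neg_neg, mul_comm (u ^ (-α)), mul_comm t u, add_comm t u]

lemma measurable_schurKernel (r α : ℝ) :
    Measurable (Function.uncurry (schurKernel r α)) := by
  unfold schurKernel Function.uncurry
  fun_prop

lemma schurKernel_le_left {r α u t : ℝ} (hr : 0 < r) (hu : 0 < u) (ht : 0 < t) :
    t⁻¹ * schurKernel r α u t ≤ u ^ (-(r + α)) * t ^ (r + α - 1) := by
  have h : (t * u / (t + u) ^ 2) ^ r ≤ (t / u) ^ r := by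
    refine Real.rpow_le_rpow (by positivity) ?_ hr.le
    rw [div_le_div_iff₀ (by positivity) hu]
    nlinarith [mul_pos ht hu, mul_pos ht ht, mul_pos (mul_pos ht ht) hu, mul_pos (mul_pos ht ht) ht]
  calc t⁻¹ * schurKernel r α u t ≤ t⁻¹ * (u ^ (-α) * t ^ α * (t / u) ^ r) := by
        unfold schurKernel; gcongr
    _ = u ^ (-(r + α)) * t ^ (r + α - 1) := by
        rw [Real.div_rpow ht.le hu.le, Real.rpow_sub ht, Real.rpow_add ht, neg_add,
          Real.rpow_add hu, Real.rpow_neg hu.le r, Real.rpow_one]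
        field_simp

lemma schurKernel_le_right {r α u t : ℝ} (hr : 0 < r) (hu : 0 < u) (ht : 0 < t) :
    t⁻¹ * schurKernel r α u t ≤ u ^ (r - α) * t ^ (α - r - 1) := by
  have h : (t * u / (t + u) ^ 2) ^ r ≤ (u / t) ^ r := by
    refine Real.rpow_le_rpow (by positivity) ?_ hr.le
    rw [div_le_div_iff₀ (by positivity) ht]
    nlinarith [mul_pos ht hu, mul_pos hu hu, mul_pos (mul_pos hu hu) ht, mul_pos (mul_pos hu hu) hu]
  calc t⁻¹ * schurKernel r α u t ≤ t⁻¹ * (u ^ (-α) * t ^ α * (u / t) ^ r) := by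
        unfold schurKernel; gcongr
    _ = u ^ (r - α) * t ^ (α - r - 1) := by
        rw [Real.div_rpow hu.le ht.le, Real.rpow_sub ht, Real.rpow_sub ht, Real.rpow_sub hu,
          Real.rpow_neg hu.le, Real.rpow_one]
        field_simp

/-- The `dt/t`-mass of the kernel, split at `t = u`: the part `t ≤ u` contributes at most
`1/(r+α)` and the part `t > u` at most `1/(r-α)`. -/
lemma lintegral_schurKernel_le {r α u : ℝ} (hr : 0 < r) (h₁ : -r < α) (h₂ : α < r) (hu : 0 < u) :
    ∫⁻ t, ENNReal.ofReal (schurKernel r α u t) ∂haarIoc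
      ≤ ENNReal.ofReal (2 * r / (r ^ 2 - α ^ 2)) := by
  have hm : Measurable (schurKernel r α u) :=
    (measurable_schurKernel r α).comp measurable_prodMk_left
  have hra : 0 < r + α := by linarith
  have hra' : 0 < r - α := by linarith
  rw [lintegral_haarIoc _ hm.ennreal_ofReal]
  have hleft : ∫⁻ t in Set.Ioc 0 u, ENNReal.ofReal t⁻¹ * ENNReal.ofReal (schurKernel r α u t)
      ≤ ENNReal.ofReal (1 / (r + α)) := by
    have hint : IntegrableOn (fun t : ℝ => u ^ (-(r + α)) * t ^ (r + α - 1)) (Set.Ioc 0 u) := by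
      rw [← intervalIntegrable_iff_integrableOn_Ioc_of_le hu.le]
      exact (intervalIntegral.intervalIntegrable_rpow' (by linarith)).const_mul _
    calc _ ≤ ∫⁻ t in Set.Ioc 0 u, ENNReal.ofReal (u ^ (-(r + α)) * t ^ (r + α - 1)) := by
          refine setLIntegral_mono' measurableSet_Ioc fun t ht => ?_
          rw [← ENNReal.ofReal_mul (inv_nonneg.2 ht.1.le)]
          exact ENNReal.ofReal_le_ofReal (schurKernel_le_left hr hu ht.1)
      _ = ENNReal.ofReal (1 / (r + α)) := by
          rw [← ofReal_integral_eq_lintegral_ofReal hint]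
          · rw [← intervalIntegral.integral_of_le hu.le, intervalIntegral.integral_const_mul,
              integral_rpow (Or.inl (by linarith)), sub_add_cancel, Real.zero_rpow hra.ne',
              Real.rpow_neg hu.le]
            have := Real.rpow_pos_of_pos hu (r + α)
            congr 1
            field_simp
            ring
          · filter_upwards [ae_restrict_mem measurableSet_Ioc] with t ht
            have := ht.1
            simp only [Pi.zero_apply]
            positivity
  have hright : ∫⁻ t in Set.Ioi u, ENNReal.ofReal t⁻¹ * ENNReal.ofReal (schurKernel r α u t)
      ≤ ENNReal.ofReal (1 / (r - α)) := by
    have hint : IntegrableOn (fun t : ℝ => u ^ (r - α) * t ^ (α - r - 1)) (Set.Ioi u) :=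
      (integrableOn_Ioi_rpow_of_lt (by linarith) hu).const_mul _
    calc _ ≤ ∫⁻ t in Set.Ioi u, ENNReal.ofReal (u ^ (r - α) * t ^ (α - r - 1)) := by
          refine setLIntegral_mono' measurableSet_Ioi fun t ht => ?_
          have ht0 : 0 < t := hu.trans ht
          rw [← ENNReal.ofReal_mul (inv_nonneg.2 ht0.le)]
          exact ENNReal.ofReal_le_ofReal (schurKernel_le_right hr hu ht0)
      _ = ENNReal.ofReal (1 / (r - α)) := by
          rw [← ofReal_integral_eq_lintegral_ofReal hint]
          · rw [integral_const_mul, integral_Ioi_rpow_of_lt (by linarith) hu, sub_add_cancel,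
              ← neg_sub r α, Real.rpow_neg hu.le]
            have := Real.rpow_pos_of_pos hu (r - α)
            congr 1
            field_simp
          · filter_upwards [ae_restrict_mem measurableSet_Ioi] with t ht
            have ht0 : 0 < t := hu.trans ht
            simp only [Pi.zero_apply]
            positivity
  calc _ ≤ ∫⁻ t in Set.Ioc 0 u ∪ Set.Ioi u,
          ENNReal.ofReal t⁻¹ * ENNReal.ofReal (schurKernel r α u t) := by
        refine lintegral_mono_set fun t ht => ?_
        rcases le_or_gt t u with h | h
        · exact Or.inl ⟨ht.1, h⟩
        · exact Or.inr h
    _ ≤ ENNReal.ofReal (1 / (r + α)) + ENNReal.ofReal (1 / (r - α)) :=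
        (lintegral_union_le _ _ _).trans (add_le_add hleft hright)
    _ = _ := by
        rw [← ENNReal.ofReal_add (by positivity) (by positivity)]
        congr 1
        rw [show r ^ 2 - α ^ 2 = (r + α) * (r - α) by ring]
        field_simp
        ring

/-- Let `r > 0`, `α ∈ (−r, r)`, `β ∈ (α, r)`, `q ∈ [1,∞]`, `s ∈ (0,1]` and
`f : (0,1] → ℝ` measurable. Then
`‖ u ↦ u^{−α} ∫₀^s (tu/(t+u)²)^r |f(t)| dt/t ‖_{L^q((0,1], du/u)}
  ≤ (2r/(r² − α²)) · s^{β−α} · ‖ u ↦ u^{−β} f(u) ‖_{L^q((0,1], du/u)}`. -/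
theorem stmt2 (r α β : ℝ) (hr : 0 < r) (hα₁ : -r < α) (hα₂ : α < r)
    (hβ₁ : α < β) (hβ₂ : β < r)
    (q : ℝ≥0∞) (hq : 1 ≤ q) (s : ℝ) (hs : s ∈ Set.Ioc (0 : ℝ) 1)
    (f : ℝ → ℝ) (hf : Measurable f) :
    lqNorm q (fun u => ENNReal.ofReal (u ^ (-α)) *
        ∫⁻ t in Set.Ioc (0 : ℝ) s,
          ENNReal.ofReal ((t * u / (t + u) ^ 2) ^ r * |f t|) * ENNReal.ofReal t⁻¹) ≤
      ENNReal.ofReal (2 * r / (r ^ 2 - α ^ 2) * s ^ (β - α)) *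
        lqNorm q (fun u => ENNReal.ofReal (u ^ (-β) * |f u|)) := by
  set c := ENNReal.ofReal (s ^ (β - α)) with hc
  have hs0 : 0 < s := hs.1
  have hg : Measurable (fun u => ENNReal.ofReal (u ^ (-β) * |f u|)) := by
    have : Measurable fun u => |f u| := hf.norm
    fun_prop
  have hM : Measurable (Function.uncurry fun u t => ENNReal.ofReal (schurKernel r α u t)) :=
    (measurable_schurKernel r α).ennreal_ofReal
  have hK : Measurable (Function.uncurry fun u t => c * ENNReal.ofReal (schurKernel r α u t)) :=
    hM.const_mul c
  have hconst : ENNReal.ofReal (2 * r / (r ^ 2 - α ^ 2) * s ^ (β - α))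
      = c * ENNReal.ofReal (2 * r / (r ^ 2 - α ^ 2)) := by
    rw [hc, ← ENNReal.ofReal_mul (by positivity), mul_comm]
  rw [hconst]
  refine le_trans (lqNorm_mono ?_) (lqNorm_schur hq _ hK _ hg _ ?_ ?_)
  · intro u hu
    have hu0 : 0 < u := hu.1
    have hKg : Measurable fun t =>
        c * ENNReal.ofReal (schurKernel r α u t) * ENNReal.ofReal (t ^ (-β) * |f t|) :=
      (hK.comp measurable_prodMk_left).mul hg
    rw [lintegral_haarIoc _ hKg, ← lintegral_const_mul' _ _ ENNReal.ofReal_ne_top]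
    refine le_trans ?_ (lintegral_mono_set (Set.Ioc_subset_Ioc_right hs.2))
    refine setLIntegral_mono' measurableSet_Ioc fun t ht => ?_
    have ht0 : 0 < t := ht.1
    have hpow : 1 ≤ s ^ (β - α) * (t ^ α * t ^ (-β)) := by
      rw [← Real.rpow_add ht0, show α + -β = -(β - α) by ring, Real.rpow_neg ht0.le,
        ← div_eq_mul_inv, one_le_div (by positivity)]
      exact Real.rpow_le_rpow ht0.le ht.2 (by linarith)
    have hk : 0 ≤ schurKernel r α u t := by unfold schurKernel; positivity
    rw [hc, ← ENNReal.ofReal_mul (by positivity), ← ENNReal.ofReal_mul (by positivity),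
      ← ENNReal.ofReal_mul (by positivity), ← ENNReal.ofReal_mul (by positivity),
      ← ENNReal.ofReal_mul (by positivity)]
    refine ENNReal.ofReal_le_ofReal ?_
    unfold schurKernel
    have hA : 0 ≤ u ^ (-α) * ((t * u / (t + u) ^ 2) ^ r * |f t| * t⁻¹) := by positivity
    calc _ ≤ u ^ (-α) * ((t * u / (t + u) ^ 2) ^ r * |f t| * t⁻¹)
          * (s ^ (β - α) * (t ^ α * t ^ (-β))) := le_mul_of_one_le_right hA hpow
      _ = _ := by ring
  · intro u hu
    rw [lintegral_const_mul' _ _ ENNReal.ofReal_ne_top]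
    gcongr
    exact lintegral_schurKernel_le hr hα₁ hα₂ hu.1
  · intro t ht
    rw [lintegral_const_mul' _ _ ENNReal.ofReal_ne_top]
    gcongr
    simp_rw [schurKernel_swap r α _ t]
    rw [← neg_sq α]
    exact lintegral_schurKernel_le hr (by linarith) (by linarith) ht.1
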